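/- Let α > 1 with α ∉ ℚ ∪ ℚ₂, let B ⊂ ℍ be nonempty with B̂ = B \ {x ∈ ℍ : x₂ ≤ |x₁|^{1/α}} finite, and define h₀ = max_{x ∈ B̂} x₂ if B̂ ≠ ∅, and h₀ = min{h ≥ 0 : B ∩ ([−⌈h^α⌉, ⌈h^α⌉] × [0,h]) ≠ ∅} if B̂ = ∅. Let l_{h₀} = [−⌊h₀^α⌋, ⌊h₀^α⌋] × {h₀}. Then there exists a constant c > 0 such that for all sufficiently large N, H_{B ∪ l_{h₀}, N}(l_{h₀}) = Σ_{w ∈ l_{h₀}} H_{B ∪ l_{h₀}, N}(w) ≥ c. -/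

import Mathlib

open Filter

namespace SHM

/-- The upper half planar lattice `ℍ = {(x₁,x₂) ∈ ℤ² : x₂ ≥ 0}` (including the x-axis). -/
def upperH : Set (ℤ × ℤ) := {p | 0 ≤ p.2}

/-- The horizontal line `L_n = {(x,n) : x ∈ ℤ}` of height `n`. -/
def lineH (n : ℤ) : Set (ℤ × ℤ) := {p | p.2 = n}

/-- The four unit steps of the planar simple random walk. -/
def dirs : Finset (ℤ × ℤ) := {(1,0), (-1,0), (0,1), (0,-1)}

/-- The position after `m` steps of the walk started at `z` whose first `n`
increments are given by `σ`. -/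
def pos (z : ℤ × ℤ) {n : ℕ} (σ : Fin n → ℤ × ℤ) (m : ℕ) : ℤ × ℤ :=
  z + ∑ i ∈ Finset.univ.filter (fun i : Fin n => (i : ℕ) < m), σ i

/-- The probability that the first `n` increments of the simple random walk
(each uniform on the four unit vectors) satisfy the predicate `E`. -/
noncomputable def stepProb (n : ℕ) (E : (Fin n → ℤ × ℤ) → Prop) : ℝ :=
  (Nat.card {σ : Fin n → ↥dirs // E fun i => ((σ i : ℤ × ℤ))} : ℝ) / 4 ^ n

/-- `P_z(S_{τ̄_A} = x)` : the walk started at `z` hits `A` (in finite time) for the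
first time precisely at the point `x`.  Here `τ̄_A = min {m ≥ 0 : S_m ∈ A}`. -/
noncomputable def hitProb (z : ℤ × ℤ) (A : Set (ℤ × ℤ)) (x : ℤ × ℤ) : ℝ :=
  ∑' n : ℕ, stepProb n fun σ =>
    pos z σ n = x ∧ x ∈ A ∧ ∀ m < n, pos z σ m ∉ A

/-- `P_z(τ̄_A < τ̄_B)` : the walk started at `z` hits `A` strictly before hitting `B`. -/
noncomputable def hitBeforeProb (z : ℤ × ℤ) (A B : Set (ℤ × ℤ)) : ℝ :=
  ∑' n : ℕ, stepProb n fun σ =>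
    pos z σ n ∈ A ∧ pos z σ n ∉ B ∧ ∀ m < n, pos z σ m ∉ A ∧ pos z σ m ∉ B

/-- The stationary harmonic measure `H_{B,N}(x) = Σ_{z ∈ L_N \ B} P_z(S_{τ̄_{B ∪ L₀}} = x)`. -/
noncomputable def harm (B : Set (ℤ × ℤ)) (N : ℕ) (x : ℤ × ℤ) : ℝ :=
  ∑' z : ↥(lineH (N : ℤ) \ B), hitProb (z : ℤ × ℤ) (B ∪ lineH 0) x

/-- `ℚ₁ = {log n₁ / log n₂ : n₁, n₂ ∈ ℤ, n₁, n₂ ≥ 2}`. -/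
def Q1 : Set ℝ := {r | ∃ n₁ n₂ : ℤ, 2 ≤ n₁ ∧ 2 ≤ n₂ ∧ r = Real.log n₁ / Real.log n₂}

/-- `ℚ₂ = {(b − dx)/(cx − a) ∈ ℝ : x ∈ ℚ₁, a, b, c, d ∈ ℤ}`. -/
def Q2 : Set ℝ :=
  {r | ∃ x ∈ Q1, ∃ a b c d : ℤ, (c : ℝ) * x - a ≠ 0 ∧ r = ((b : ℝ) - d * x) / ((c : ℝ) * x - a)}

/-- `B̂ = B \ {x ∈ ℍ : x₂ ≤ |x₁|^{1/α}}`. -/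
def Bhat (α : ℝ) (B : Set (ℤ × ℤ)) : Set (ℤ × ℤ) :=
  B \ {x ∈ upperH | (x.2 : ℝ) ≤ |(x.1 : ℝ)| ^ (1 / α)}

/-- The horizontal segment `l_h = [−⌊h^α⌋, ⌊h^α⌋] × {h}`. -/
def segL (α : ℝ) (h : ℤ) : Set (ℤ × ℤ) := {x | |x.1| ≤ ⌊(h : ℝ) ^ α⌋ ∧ x.2 = h}

open scoped ENNReal

/-- average over the four neighbours -/
noncomputable def avg (g : ℤ × ℤ → ℝ≥0∞) (z : ℤ × ℤ) : ℝ≥0∞ :=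
  4⁻¹ * (g (z + (1,0)) + g (z + (-1,0)) + g (z + (0,1)) + g (z + (0,-1)))

open Classical in
/-- expected boundary value collected exactly at time `n` -/
noncomputable def ee (A : Set (ℤ × ℤ)) (b : ℤ × ℤ → ℝ≥0∞) : ℕ → ℤ × ℤ → ℝ≥0∞
  | 0 => fun z => if z ∈ A then b z else 0
  | n + 1 => fun z => if z ∈ A then 0 else avg (ee A b n) z

/-- expected boundary value at the hitting time -/
noncomputable def UU (A : Set (ℤ × ℤ)) (b : ℤ × ℤ → ℝ≥0∞) (z : ℤ × ℤ) : ℝ≥0∞ :=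
  ∑' n, ee A b n z

lemma avg_mono {f g : ℤ × ℤ → ℝ≥0∞} (h : ∀ z, f z ≤ g z) (z) : avg f z ≤ avg g z := by
  unfold avg
  gcongr <;> apply h

lemma avg_add (f g : ℤ × ℤ → ℝ≥0∞) (z) : avg (fun z => f z + g z) z = avg f z + avg g z := by
  unfold avg
  ring

lemma avg_mul (c : ℝ≥0∞) (f : ℤ × ℤ → ℝ≥0∞) (z) : avg (fun z => c * f z) z = c * avg f z := by
  unfold avg
  ring

lemma avg_tsum {ι : Type} (f : ι → ℤ × ℤ → ℝ≥0∞) (z) :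
    avg (fun z => ∑' i, f i z) z = ∑' i, avg (f i) z := by
  unfold avg
  rw [ENNReal.tsum_mul_left, ENNReal.tsum_add, ENNReal.tsum_add, ENNReal.tsum_add]

lemma UU_of_mem {A : Set (ℤ × ℤ)} (b : ℤ × ℤ → ℝ≥0∞) {z : ℤ × ℤ} (h : z ∈ A) : UU A b z = b z := by
  unfold UU
  rw [tsum_eq_single 0]
  · simp [ee, h]
  · intro n hn
    obtain ⟨k, rfl⟩ := Nat.exists_eq_succ_of_ne_zero hn
    simp [ee, h]

lemma UU_of_not_mem {A : Set (ℤ × ℤ)} (b : ℤ × ℤ → ℝ≥0∞) {z : ℤ × ℤ} (h : z ∉ A) :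
    UU A b z = avg (UU A b) z := by
  have : avg (UU A b) z = ∑' n, avg (ee A b n) z := avg_tsum (fun n => ee A b n) z
  rw [this]
  unfold UU
  rw [tsum_eq_zero_add' ENNReal.summable]
  simp [ee, h]

lemma UU_le0 {A : Set (ℤ × ℤ)} {b g : ℤ × ℤ → ℝ≥0∞} (hA : ∀ z ∈ A, b z ≤ g z)
    (hs : ∀ z ∉ A, avg g z ≤ g z) (z : ℤ × ℤ) : UU A b z ≤ g z := by
  unfold UU
  apply ENNReal.tsum_le_of_sum_range_le
  intro n
  induction n generalizing z with
  | zero => simp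
  | succ n ih =>
    rw [Finset.sum_range_succ']
    by_cases h : z ∈ A
    · simpa [ee, h] using hA z h
    · simp only [ee, h, if_false, add_zero]
      refine le_trans ?_ (hs z h)
      have : ∑ k ∈ Finset.range n, avg (ee A b k) z
          = avg (fun z => ∑ k ∈ Finset.range n, ee A b k z) z := by
        unfold avg
        rw [← Finset.mul_sum]
        simp only [Finset.sum_add_distrib]
      rw [this]
      exact avg_mono ih z

lemma UU_le {A : Set (ℤ × ℤ)} {b g : ℤ × ℤ → ℝ≥0∞} (hA : ∀ z ∈ A, b z ≤ g z)
    (hs : ∀ z ∉ A, avg g z ≤ g z ∨ UU A b z ≤ g z) (z : ℤ × ℤ) : UU A b z ≤ g z := by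
  have := UU_le0 (A := A) (b := b) (g := fun z => min (UU A b z) (g z)) ?_ ?_ z
  · exact this.trans (min_le_right _ _)
  · intro z hz
    rw [UU_of_mem _ hz]
    exact le_min le_rfl (hA z hz)
  · intro z hz
    have h1 : avg (fun z => min (UU A b z) (g z)) z ≤ UU A b z := by
      rw [UU_of_not_mem b hz]
      exact avg_mono (fun z => min_le_left _ _) z
    refine le_min h1 ?_
    rcases hs z hz with h | h
    · exact (avg_mono (fun z => min_le_right _ _) z).trans h
    · exact h1.trans h

lemma UU_le_one {A : Set (ℤ × ℤ)} {b : ℤ × ℤ → ℝ≥0∞} (hb : ∀ z, b z ≤ 1) (z : ℤ × ℤ) :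
    UU A b z ≤ 1 := by
  apply UU_le0 (g := fun _ => 1) (fun z _ => hb z)
  intro z _
  unfold avg
  apply le_of_eq
  rw [show (1:ℝ≥0∞) + 1 + 1 + 1 = 4 by norm_num]
  exact ENNReal.inv_mul_cancel (by norm_num) (by norm_num)

lemma ee_tsum {ι : Type} (A : Set (ℤ × ℤ)) (b : ι → ℤ × ℤ → ℝ≥0∞) (n : ℕ) (z : ℤ × ℤ) :
    ee A (fun z => ∑' i, b i z) n z = ∑' i, ee A (b i) n z := by
  induction n generalizing z with
  | zero => by_cases h : z ∈ A <;> simp [ee, h]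
  | succ n ih =>
    by_cases h : z ∈ A
    · simp [ee, h]
    · simp only [ee, h, if_false]
      rw [← avg_tsum]
      congr 1
      funext z
      exact ih z

lemma UU_tsum {ι : Type} (A : Set (ℤ × ℤ)) (b : ι → ℤ × ℤ → ℝ≥0∞) (z : ℤ × ℤ) :
    UU A (fun z => ∑' i, b i z) z = ∑' i, UU A (b i) z := by
  unfold UU
  rw [ENNReal.tsum_comm]
  congr 1
  funext n
  exact ee_tsum A b n z

lemma ee_mul (A : Set (ℤ × ℤ)) (c : ℝ≥0∞) (b : ℤ × ℤ → ℝ≥0∞) (n : ℕ) (z : ℤ × ℤ) :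
    ee A (fun z => c * b z) n z = c * ee A b n z := by
  induction n generalizing z with
  | zero => by_cases h : z ∈ A <;> simp [ee, h]
  | succ n ih =>
    by_cases h : z ∈ A
    · simp [ee, h]
    · simp only [ee, h, if_false]
      rw [← avg_mul]
      congr 1
      funext z
      exact ih z

lemma UU_mul (A : Set (ℤ × ℤ)) (c : ℝ≥0∞) (b : ℤ × ℤ → ℝ≥0∞) (z : ℤ × ℤ) :
    UU A (fun z => c * b z) z = c * UU A b z := by
  unfold UU
  simp only [ee_mul, ENNReal.tsum_mul_left]

lemma UU_mono {A : Set (ℤ × ℤ)} {b c : ℤ × ℤ → ℝ≥0∞} (h : ∀ z ∈ A, b z ≤ c z) (z : ℤ × ℤ) :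
    UU A b z ≤ UU A c z := by
  apply UU_le0
  · intro z hz
    rw [UU_of_mem _ hz]
    exact h z hz
  · intro z hz
    rw [← UU_of_not_mem _ hz]

/-- half plane -/
def Hp (H : ℤ) : Set (ℤ × ℤ) := {z | z.2 ≤ H}

lemma ee_shift (H : ℤ) (b : ℤ × ℤ → ℝ≥0∞) (a : ℤ) (n : ℕ) (z : ℤ × ℤ) :
    ee (Hp H) (fun z => b (z + (a, 0))) n z = ee (Hp H) b n (z + (a, 0)) := by
  have hm : ∀ z : ℤ × ℤ, z + (a, 0) ∈ Hp H ↔ z ∈ Hp H := by intro z; simp [Hp]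
  induction n generalizing z with
  | zero => by_cases h : z ∈ Hp H <;> simp [ee, h, hm]
  | succ n ih =>
    by_cases h : z ∈ Hp H
    · simp [ee, h, hm]
    · simp only [ee, h, hm, if_false]
      unfold avg
      simp only [ih, add_right_comm]

lemma UU_shift (H : ℤ) (b : ℤ × ℤ → ℝ≥0∞) (a : ℤ) (z : ℤ × ℤ) :
    UU (Hp H) (fun z => b (z + (a, 0))) z = UU (Hp H) b (z + (a, 0)) := by
  unfold UU
  simp only [ee_shift]

open Classical in
/-- point mass -/
noncomputable def dl (x : ℤ × ℤ) (z : ℤ × ℤ) : ℝ≥0∞ := if z = x then 1 else 0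

lemma dl_le (x z) : dl x z ≤ 1 := by
  unfold dl; split_ifs <;> simp

lemma dl_shift (H k a x y : ℤ) :
    UU (Hp H) (dl (k, H)) (x, y) = UU (Hp H) (dl (k + a, H)) (x + a, y) := by
  have := UU_shift H (dl (k + a, H)) a (x, y)
  rw [Prod.mk_add_mk, add_zero] at this
  rw [← this]
  congr 1
  funext z
  unfold dl
  congr 1
  simp [Prod.ext_iff]

lemma UU_one (H : ℤ) (x : ℤ) (j : ℕ) : UU (Hp H) (fun _ => 1) (x, H + j) = 1 := by
  have hx : ∀ x y : ℤ, UU (Hp H) (fun _ => 1) (x, y) = UU (Hp H) (fun _ => 1) (0, y) := by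
    intro x y
    have := UU_shift H (fun _ => 1) x (0, y)
    simpa using this.symm
  rw [hx]
  set m : ℕ → ℝ := fun j => (UU (Hp H) (fun _ => 1) (0, H + j)).toReal with hm
  have hle : ∀ z, UU (Hp H) (fun _ => 1) z ≤ 1 := UU_le_one (fun _ => le_rfl)
  have hfin : ∀ z, UU (Hp H) (fun _ => 1) z ≠ ⊤ := fun z => ne_top_of_le_ne_top (by simp) (hle z)
  have m0 : m 0 = 1 := by
    simp only [hm]
    rw [UU_of_mem _ (by simp [Hp])]; simp
  have hrec : ∀ j, m (j+2) - m (j+1) = m (j+1) - m j := by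
    intro j
    have h := UU_of_not_mem (A := Hp H) (fun _ => 1) (z := (0, H + (j+1:ℕ))) (by simp [Hp])
    unfold avg at h
    simp only [Prod.mk_add_mk, add_zero] at h
    rw [hx (0+1), hx (0 + -1)] at h
    have h2 := congrArg ENNReal.toReal h
    rw [ENNReal.toReal_mul, ENNReal.toReal_add (by simp [hfin]) (hfin _),
      ENNReal.toReal_add (by simp [hfin]) (hfin _), ENNReal.toReal_add (hfin _) (hfin _)] at h2
    simp only [hm]
    rw [show H + ((j+1:ℕ):ℤ) + 1 = H + ((j+2:ℕ):ℤ) by push_cast; ring,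
      show H + ((j+1:ℕ):ℤ) + -1 = H + ((j:ℕ):ℤ) by push_cast; ring] at h2
    norm_num at h2
    push_cast at *
    linarith
  have hd : ∀ j, m (j+1) - m j = m 1 - m 0 := by
    intro j
    induction j with
    | zero => rfl
    | succ j ih => rw [hrec, ih]
  have hlin : ∀ j : ℕ, m j = 1 + j * (m 1 - m 0) := by
    intro j
    induction j with
    | zero => simp [m0]
    | succ j ih => have := hd j; push_cast; linarith
  have h0 : ∀ j, 0 ≤ m j := fun j => ENNReal.toReal_nonneg
  have hle1 : ∀ j, m j ≤ 1 := fun j => by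
    have := ENNReal.toReal_mono (by simp) (hle (0, H + j))
    simpa using this
  have hz : m 1 - m 0 = 0 := by
    by_contra hne
    have hneg : m 1 - m 0 < 0 := lt_of_le_of_ne (by have := hle1 1; linarith) hne
    obtain ⟨k, hk⟩ := exists_nat_gt (1 / (-(m 1 - m 0)))
    rw [div_lt_iff₀ (by linarith)] at hk
    have := hlin k
    have := h0 k
    linarith
  have : m j = 1 := by rw [hlin j, hz]; simp
  rw [← ENNReal.ofReal_toReal (hfin (0, H + j))]
  simp only [hm] at this
  rw [this]; simp

lemma ee_unimodal (H : ℤ) (n : ℕ) (a b y : ℤ) (h : a.natAbs ≤ b.natAbs) (hp : a % 2 = b % 2) :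
    ee (Hp H) (dl (0, H)) n (b, y) ≤ ee (Hp H) (dl (0, H)) n (a, y) := by
  induction n generalizing a b y with
  | zero =>
    by_cases hy : y ≤ H
    · simp only [ee, Hp, Set.mem_ofPred_eq, hy, if_true, dl]
      split_ifs with h1 h2
      · exact le_rfl
      · exfalso; apply h2
        simp only [Prod.mk.injEq] at h1 ⊢
        omega
      · exact zero_le
      · exact le_rfl
    · simp [ee, Hp, hy]
  | succ n ih =>
    by_cases hy : y ≤ H
    · simp [ee, Hp, hy]
    · simp only [ee, Hp, Set.mem_ofPred_eq, hy, if_false, avg, Prod.mk_add_mk, add_zero]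
      apply mul_le_mul_right
      refine add_le_add (add_le_add ?_ (ih _ _ _ h hp)) (ih _ _ _ h hp)
      by_cases hab : (0 ≤ a ∧ 0 ≤ b) ∨ (a < 0 ∧ b < 0)
      · exact add_le_add (ih _ _ _ (by omega) (by omega)) (ih _ _ _ (by omega) (by omega))
      · rw [add_comm]
        exact add_le_add (ih _ _ _ (by omega) (by omega)) (ih _ _ _ (by omega) (by omega))

lemma kernel_le_inv (H : ℤ) (x y : ℤ) :
    UU (Hp H) (dl (0, H)) (x, y) ≤ ((x.natAbs : ℝ≥0∞) + 1)⁻¹ := by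
  have h1 : ∀ i ∈ Finset.range (x.natAbs + 1), UU (Hp H) (dl (0, H)) (x, y) ≤
      UU (Hp H) (dl ((x.natAbs : ℤ) - 2 * i, H)) (0, y) := by
    intro i hi
    rw [Finset.mem_range] at hi
    rw [dl_shift H ((x.natAbs : ℤ) - 2 * i) (-((x.natAbs : ℤ) - 2 * i)) 0 y]
    rw [show (x.natAbs : ℤ) - 2 * i + -((x.natAbs : ℤ) - 2 * i) = 0 by ring]
    unfold UU
    apply ENNReal.tsum_le_tsum
    intro n
    apply ee_unimodal <;> omega
  have h2 := Finset.sum_le_sum h1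
  rw [Finset.sum_const, Finset.card_range, nsmul_eq_mul] at h2
  have h3 : ∑ i ∈ Finset.range (x.natAbs + 1), UU (Hp H) (dl ((x.natAbs : ℤ) - 2 * i, H)) (0, y) ≤ 1 := by
    rw [← Finset.tsum_subtype, ← UU_tsum]
    apply UU_le_one
    intro z
    rw [Finset.tsum_subtype (Finset.range (x.natAbs + 1)) (fun i : ℕ => dl ((x.natAbs : ℤ) - 2 * i, H) z)]
    by_cases hex : ∃ i ∈ Finset.range (x.natAbs + 1), z = ((x.natAbs : ℤ) - 2 * i, H)
    · obtain ⟨i, hi, rfl⟩ := hex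
      rw [Finset.sum_eq_single_of_mem i hi]
      · exact dl_le _ _
      · intro j _ hj
        unfold dl
        rw [if_neg]
        simp only [Prod.mk.injEq]; omega
    · push Not at hex
      rw [Finset.sum_eq_zero]
      · simp
      · intro i hi
        unfold dl
        rw [if_neg (hex i hi)]
  have h4 := h2.trans h3
  push_cast at h4
  rw [ENNReal.le_inv_iff_mul_le, mul_comm]
  exact h4

open Classical in
/-- escape function of a box of size `m` standing on height `H` around `x0` -/
noncomputable def Ph (H x0 m : ℤ) (z : ℤ × ℤ) : ℝ≥0∞ :=
  if |z.1 - x0| ≤ m ∧ H ≤ z.2 ∧ z.2 ≤ H + m then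
    ENNReal.ofReal ((((z.1 : ℝ) - x0)^2 + 2 * m * ((z.2 : ℝ) - H) - ((z.2 : ℝ) - H)^2) / (m:ℝ)^2)
  else ⊤

lemma Ph_out {H x0 m : ℤ} {z : ℤ × ℤ} (h : ¬ (|z.1 - x0| ≤ m ∧ H ≤ z.2 ∧ z.2 ≤ H + m)) :
    Ph H x0 m z = ⊤ := by
  unfold Ph; rw [if_neg h]

lemma Ph_cases (H x0 m : ℤ) (hm : 1 ≤ m) (z : ℤ × ℤ) (hz : z ∉ Hp H) :
    avg (Ph H x0 m) z ≤ Ph H x0 m z ∨ (|z.1 - x0| ≤ m ∧ 1 ≤ Ph H x0 m z) ∨ Ph H x0 m z = ⊤ := by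
  obtain ⟨x, y⟩ := z
  have hy : H < y := by simpa [Hp] using hz
  have hmR : (1:ℝ) ≤ m := by exact_mod_cast hm
  have hm2 : (0:ℝ) < (m:ℝ)^2 := by positivity
  by_cases hbox : |x - x0| ≤ m ∧ H ≤ y ∧ y ≤ H + m
  swap
  · right; right; exact Ph_out hbox
  by_cases hint : |x - x0| < m ∧ y < H + m
  · left
    have hb := abs_lt.mp hint.1
    have key : ∀ a c : ℤ, |a - x0| ≤ m → H ≤ c → c ≤ H + m →
        0 ≤ (((a : ℝ) - x0)^2 + 2 * m * ((c : ℝ) - H) - ((c : ℝ) - H)^2) / (m:ℝ)^2 := by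
      intro a c _ h2 h3
      have h2' : (H:ℝ) ≤ c := by exact_mod_cast h2
      have h3' : (c:ℝ) ≤ H + m := by exact_mod_cast h3
      apply div_nonneg _ hm2.le
      nlinarith [sq_nonneg ((a:ℝ) - x0), mul_nonneg (sub_nonneg.mpr h2') (by linarith : 0 ≤ 2 * (m:ℝ) - (c - H))]
    have c1 : |x + 1 - x0| ≤ m ∧ H ≤ y + 0 ∧ y + 0 ≤ H + m := ⟨by rw [abs_le]; omega, by omega, by omega⟩
    have c2 : |x + -1 - x0| ≤ m ∧ H ≤ y + 0 ∧ y + 0 ≤ H + m := ⟨by rw [abs_le]; omega, by omega, by omega⟩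
    have c3 : |x + 0 - x0| ≤ m ∧ H ≤ y + 1 ∧ y + 1 ≤ H + m := ⟨by rw [abs_le]; omega, by omega, by omega⟩
    have c4 : |x + 0 - x0| ≤ m ∧ H ≤ y + -1 ∧ y + -1 ≤ H + m := ⟨by rw [abs_le]; omega, by omega, by omega⟩
    have k1 := key _ _ c1.1 c1.2.1 c1.2.2
    have k2 := key _ _ c2.1 c2.2.1 c2.2.2
    have k3 := key _ _ c3.1 c3.2.1 c3.2.2
    have k4 := key _ _ c4.1 c4.2.1 c4.2.2
    unfold avg Ph
    simp only [Prod.mk_add_mk]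
    rw [if_pos c1, if_pos c2, if_pos c3, if_pos c4, if_pos hbox]
    rw [← ENNReal.ofReal_add k1 k2, ← ENNReal.ofReal_add (add_nonneg k1 k2) k3,
      ← ENNReal.ofReal_add (add_nonneg (add_nonneg k1 k2) k3) k4,
      show (4:ℝ≥0∞)⁻¹ = ENNReal.ofReal (1/4) by
        rw [one_div, ENNReal.ofReal_inv_of_pos (by norm_num)]; norm_num,
      ← ENNReal.ofReal_mul (by norm_num)]
    apply le_of_eq
    congr 1
    push_cast
    field_simp
    ring
  · right; left
    refine ⟨hbox.1, ?_⟩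
    unfold Ph
    rw [if_pos hbox, ENNReal.one_le_ofReal, le_div_iff₀ hm2, one_mul]
    have h2' : (H:ℝ) ≤ y := by exact_mod_cast hbox.2.1
    have h3' : (y:ℝ) ≤ H + m := by exact_mod_cast hbox.2.2
    by_cases hs : |x - x0| = m
    · have : ((x:ℝ) - x0)^2 = (m:ℝ)^2 := by
        rw [← hs]; push_cast; rw [sq_abs]
      dsimp only
      rw [this]
      nlinarith [mul_nonneg (sub_nonneg.mpr h2') (by linarith : 0 ≤ 2 * (m:ℝ) - (y - H))]
    · have : y = H + m := by
        by_contra hne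
        exact hint ⟨lt_of_le_of_ne hbox.1 hs, lt_of_le_of_ne hbox.2.2 hne⟩
      subst this
      push_cast
      nlinarith [sq_nonneg ((x:ℝ) - x0)]

lemma Ph_center (H x0 m j : ℤ) (hm : 1 ≤ m) (hj : 0 ≤ j) (hjm : j ≤ m) :
    Ph H x0 m (x0, H + j) ≤ ENNReal.ofReal (2 * j / m) := by
  unfold Ph
  rw [if_pos ⟨by simp; omega, by simp; omega, by simp; omega⟩]
  apply ENNReal.ofReal_le_ofReal
  have hmR : (1:ℝ) ≤ m := by exact_mod_cast hm
  push_cast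
  rw [div_le_div_iff₀ (by positivity) (by positivity)]
  have : (0:ℝ) ≤ m * j^2 := by positivity
  nlinarith

lemma kernel_le (H x0 m : ℤ) (hm : 1 ≤ m) (hx : 2 * m ≤ |x0|) (z : ℤ × ℤ) :
    UU (Hp H) (dl (0, H)) z ≤ ((m.toNat : ℝ≥0∞) + 1)⁻¹ * Ph H x0 m z := by
  have hne : ((m.toNat : ℝ≥0∞) + 1)⁻¹ ≠ 0 := by
    rw [ENNReal.inv_ne_zero]; simp
  apply UU_le
  · intro z hz
    by_cases h : z = (0, H)
    · rw [Ph_out]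
      · rw [ENNReal.mul_top hne]; exact le_top
      · subst h
        intro hh
        have := hh.1
        simp only [zero_sub, abs_neg] at this
        omega
    · unfold dl; rw [if_neg h]; exact zero_le
  · intro z hz
    rcases Ph_cases H x0 m hm z hz with h | h | h
    · left
      rw [avg_mul]
      gcongr
    · right
      have h1 := kernel_le_inv H z.1 z.2
      calc UU (Hp H) (dl (0, H)) z ≤ ((z.1.natAbs : ℝ≥0∞) + 1)⁻¹ := h1
        _ ≤ ((m.toNat : ℝ≥0∞) + 1)⁻¹ := by
          apply ENNReal.inv_le_inv.mpr
          gcongr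
          have h3 := abs_sub_abs_le_abs_sub x0 z.1
          rw [abs_sub_comm] at h3
          have := h.1
          rw [Int.abs_eq_natAbs z.1] at h3
          omega
        _ = ((m.toNat : ℝ≥0∞) + 1)⁻¹ * 1 := (mul_one _).symm
        _ ≤ _ := by gcongr; exact h.2
    · right
      rw [h, ENNReal.mul_top hne]; exact le_top

open Classical in
lemma window (H x0 m : ℤ) (hm : 1 ≤ m) (z : ℤ × ℤ) :
    UU (Hp H) (fun _ => 1) z ≤
      UU (Hp H) (fun w => if w.2 = H ∧ |w.1 - x0| ≤ m then 1 else 0) z + Ph H x0 m z := by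
  apply UU_le (g := fun z => UU (Hp H) (fun w => if w.2 = H ∧ |w.1 - x0| ≤ m then 1 else 0) z + Ph H x0 m z)
  · intro z hz
    by_cases h : z.2 = H ∧ |z.1 - x0| ≤ m
    · rw [UU_of_mem _ hz, if_pos h]; exact le_self_add
    · rw [Ph_out]
      · simp
      · have : z.2 ≤ H := hz
        intro hh; apply h; exact ⟨by omega, hh.1⟩
  · intro z hz
    rcases Ph_cases H x0 m hm z hz with h | h | h
    · left
      rw [avg_add, ← UU_of_not_mem _ hz]
      gcongr
    · right
      exact (UU_le_one (fun _ => le_rfl) z).trans (h.2.trans le_add_self)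
    · right
      rw [h]; simp

/-! bridge to the combinatorial definitions -/

lemma pos_zero (z : ℤ × ℤ) {n : ℕ} (σ : Fin n → ℤ × ℤ) : pos z σ 0 = z := by
  simp [pos]

lemma pos_cons (z d : ℤ × ℤ) {n : ℕ} (σ : Fin n → ℤ × ℤ) (m : ℕ) :
    pos z (Fin.cons d σ : Fin (n+1) → ℤ × ℤ) (m + 1) = pos (z + d) σ m := by
  unfold pos
  rw [Finset.sum_filter, Finset.sum_filter, Fin.sum_univ_succ]
  simp [add_assoc]

/-- the event -/
def Ev (z : ℤ × ℤ) (A : Set (ℤ × ℤ)) (x : ℤ × ℤ) (n : ℕ) (σ : Fin n → ℤ × ℤ) : Prop :=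
  pos z σ n = x ∧ x ∈ A ∧ ∀ m < n, pos z σ m ∉ A

lemma Ev_cons (z : ℤ × ℤ) (A : Set (ℤ × ℤ)) (x : ℤ × ℤ) (n : ℕ) (d : ℤ × ℤ) (σ : Fin n → ℤ × ℤ) :
    Ev z A x (n+1) (Fin.cons d σ) ↔ z ∉ A ∧ Ev (z + d) A x n σ := by
  unfold Ev
  rw [pos_cons]
  constructor
  · rintro ⟨h1, h2, h3⟩
    refine ⟨?_, h1, h2, ?_⟩
    · have := h3 0 (by omega)
      rwa [pos_zero] at this
    · intro m hm
      have := h3 (m+1) (by omega)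
      rwa [pos_cons] at this
  · rintro ⟨h0, h1, h2, h3⟩
    refine ⟨h1, h2, ?_⟩
    intro m hm
    cases m with
    | zero => rwa [pos_zero]
    | succ m => rw [pos_cons]; exact h3 m (by omega)

lemma stepProb_succ (z : ℤ × ℤ) (A : Set (ℤ × ℤ)) (x : ℤ × ℤ) (n : ℕ) (hz : z ∉ A) :
    stepProb (n+1) (Ev z A x (n+1)) = (stepProb n (Ev (z + (1,0)) A x n)
      + stepProb n (Ev (z + (-1,0)) A x n) + stepProb n (Ev (z + (0,1)) A x n)
      + stepProb n (Ev (z + (0,-1)) A x n)) / 4 := by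
  have e : {σ : Fin (n+1) → ↥dirs // Ev z A x (n+1) fun i => ((σ i : ℤ × ℤ))} ≃
      Σ d : ↥dirs, {σ : Fin n → ↥dirs // Ev (z + d) A x n fun i => ((σ i : ℤ × ℤ))} := by
    refine Equiv.trans (Equiv.subtypeEquiv (p := fun σ : Fin (n+1) → ↥dirs => Ev z A x (n+1) fun i => ((σ i : ℤ × ℤ)))
      (q := fun s : ↥dirs × (Fin n → ↥dirs) => Ev (z + s.1) A x n fun i => ((s.2 i : ℤ × ℤ)))
      (Fin.consEquiv (fun _ => ↥dirs)).symm ?_) ?_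
    · intro σ
      have : (fun i => ((σ i : ℤ × ℤ))) = Fin.cons ((σ 0 : ↥dirs) : ℤ × ℤ) (fun i => ((σ (Fin.succ i) : ↥dirs) : ℤ × ℤ)) := by
        funext i
        refine Fin.cases ?_ (fun i => ?_) i <;> simp
      rw [this, Ev_cons]
      simp [hz, Fin.consEquiv, Fin.tail]
    · exact Equiv.subtypeProdEquivSigmaSubtype
        (fun (d : ↥dirs) (σ : Fin n → ↥dirs) => Ev (z + d) A x n fun i => ((σ i : ℤ × ℤ)))
  have hs : ∀ f : ℤ × ℤ → ℕ, ∑ d : ↥dirs, f d = f (1,0) + f (-1,0) + f (0,1) + f (0,-1) := by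
    intro f
    rw [Finset.sum_coe_sort dirs f]
    unfold dirs
    rw [Finset.sum_insert (by decide), Finset.sum_insert (by decide), Finset.sum_insert (by decide),
      Finset.sum_singleton]
    ring
  unfold stepProb
  rw [Nat.card_congr e, Nat.card_sigma,
    hs (fun d => Nat.card {σ : Fin n → ↥dirs // Ev (z + d) A x n fun i => ((σ i : ℤ × ℤ))})]
  push_cast
  rw [pow_succ]
  field_simp

lemma stepProb_eq (z : ℤ × ℤ) (A : Set (ℤ × ℤ)) (x : ℤ × ℤ) (n : ℕ) :
    ENNReal.ofReal (stepProb n (Ev z A x n)) = ee A (dl x) n z := by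
  have nn : ∀ n z, 0 ≤ stepProb n (Ev z A x n) := fun n z => by unfold stepProb; positivity
  induction n generalizing z with
  | zero =>
    have : ∀ σ : Fin 0 → ℤ × ℤ, Ev z A x 0 σ ↔ (z = x ∧ x ∈ A) := by
      intro σ; unfold Ev; rw [pos_zero]; simp
    unfold stepProb
    simp only [this, ee, dl]
    by_cases h : z = x ∧ x ∈ A
    · obtain ⟨rfl, h⟩ := h
      simp [h]
    · simp only [h]
      by_cases h1 : z ∈ A
      · rw [if_pos h1, if_neg]
        · simp
        · rintro rfl; exact h ⟨rfl, h1⟩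
      · simp [h1]
  | succ n ih =>
    by_cases hz : z ∈ A
    · have : ∀ σ : Fin (n+1) → ℤ × ℤ, Ev z A x (n+1) σ ↔ False := by
        intro σ; unfold Ev
        simp only [iff_false]
        rintro ⟨_, _, h⟩
        have := h 0 (by omega)
        rw [pos_zero] at this
        exact this hz
      simp only [ee, hz, if_true]
      unfold stepProb
      simp only [this]
      simp
    · rw [stepProb_succ z A x n hz]
      simp only [ee, hz, if_false, avg, ← ih]
      rw [← ENNReal.ofReal_add (nn _ _) (nn _ _), ← ENNReal.ofReal_add (add_nonneg (nn _ _) (nn _ _)) (nn _ _),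
        ← ENNReal.ofReal_add (add_nonneg (add_nonneg (nn _ _) (nn _ _)) (nn _ _)) (nn _ _),
        show (4:ℝ≥0∞)⁻¹ = ENNReal.ofReal (1/4) by
          rw [one_div, ENNReal.ofReal_inv_of_pos (by norm_num)]; norm_num,
        ← ENNReal.ofReal_mul (by norm_num)]
      congr 1
      ring

lemma hitProb_eq (z : ℤ × ℤ) (A : Set (ℤ × ℤ)) (x : ℤ × ℤ) :
    hitProb z A x = (UU A (dl x) z).toReal := by
  have nn : ∀ n z, 0 ≤ stepProb n (Ev z A x n) := fun n z => by unfold stepProb; positivity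
  have h1 : hitProb z A x = ∑' n, stepProb n (Ev z A x n) := rfl
  have h2 : UU A (dl x) z = ∑' n, ENNReal.ofReal (stepProb n (Ev z A x n)) := by
    unfold UU
    simp only [stepProb_eq]
  rw [h1, h2, ENNReal.tsum_toReal_eq (fun _ => ENNReal.ofReal_ne_top)]
  congr 1
  funext n
  rw [ENNReal.toReal_ofReal (nn n z)]

lemma mass_le (H k N : ℤ) : ∑' x : ℤ, UU (Hp H) (dl (k, H)) (x, N) ≤ 1 := by
  have h1 : ∀ x : ℤ, UU (Hp H) (dl (k, H)) (x, N) = UU (Hp H) (dl (k - x, H)) (0, N) := by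
    intro x
    rw [dl_shift H k (-x) x N, add_neg_cancel, sub_eq_add_neg]
  simp only [h1]
  rw [← UU_tsum]
  apply UU_le_one
  intro z
  rw [tsum_eq_single (k - z.1)]
  · exact dl_le _ _
  · intro x hx
    unfold dl
    rw [if_neg]
    intro h
    apply hx
    rw [h]; ring

lemma mass_ge (H N : ℤ) (hN : H ≤ N) : 1 ≤ ∑' x : ℤ, UU (Hp H) (dl (0, H)) (x, N) := by
  have h1 : ∀ x : ℤ, UU (Hp H) (dl (0, H)) (x, N) = UU (Hp H) (dl (-x, H)) (0, N) := by
    intro x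
    rw [dl_shift H 0 (-x) x N, add_neg_cancel, zero_add]
  simp only [h1]
  rw [← UU_tsum]
  obtain ⟨j, rfl⟩ : ∃ j : ℕ, N = H + j := ⟨(N - H).toNat, by omega⟩
  rw [← UU_one H 0 j]
  classical
  have := UU_le (A := Hp H) (b := fun _ => 1)
    (g := fun z => if z.2 < H then ⊤ else UU (Hp H) (fun z => ∑' x : ℤ, dl (-x, H) z) z) ?_ ?_ (0, H + j)
  · have hlt : ¬ (H + (j:ℤ) < H) := by omega
    simpa only [hlt, if_false] using this
  · intro z hz
    by_cases h : z.2 < H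
    · simp [h]
    · simp only [h, if_false]
      rw [UU_of_mem _ hz]
      have hz' : z.2 ≤ H := hz
      refine le_trans ?_ (ENNReal.le_tsum (-z.1))
      unfold dl
      rw [if_pos]
      ext
      · simp
      · simp; omega
  · intro z hz
    left
    have hz' : H < z.2 := by simpa [Hp] using hz
    have e1 : ¬ (z.2 < H) := by omega
    have e2 : ¬ (z.2 + 1 < H) := by omega
    have e3 : ¬ (z.2 + -1 < H) := by omega
    rw [if_neg e1, UU_of_not_mem _ hz]
    unfold avg
    simp only [Prod.snd_add, add_zero, e1, e2, e3, if_false]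
    exact le_rfl

open Classical in
lemma Q_lower (H x0 m : ℤ) (q : ℤ → ℝ≥0∞) (c : ℝ≥0∞) (hq : ∀ k, |k - x0| ≤ m → c ≤ q k) (z : ℤ × ℤ) :
    c * UU (Hp H) (fun w => if w.2 = H ∧ |w.1 - x0| ≤ m then 1 else 0) z ≤
      ∑' k, q k * UU (Hp H) (dl (k, H)) z := by
  simp only [← UU_mul]
  rw [← UU_tsum]
  apply UU_mono
  intro w _
  split_ifs with h
  · refine le_trans ?_ (ENNReal.le_tsum w.1)
    rw [dl, if_pos (by rw [← h.1])]
    simpa using hq _ h.2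
  · simp

lemma Q_dominate (β : ℝ) (hβ0 : 0 < β) (hβ1 : β < 1) : ∃ q : ℤ → ℝ≥0∞, ∑' k, q k ≤ 2⁻¹ ∧
    ∃ X0 : ℤ, ∀ H x0 y : ℤ, X0 ≤ |x0| → H < y → ((y - H : ℤ) : ℝ) ≤ |(x0:ℝ)| ^ β →
      UU (Hp H) (dl (0, H)) (x0, y) ≤ ∑' k, q k * UU (Hp H) (dl (k, H)) (x0, y) := by
  classical
  set q0 : ℤ → ℝ≥0∞ := fun k => ENNReal.ofReal (144 * |(k:ℝ)| ^ (β - 2)) with hq0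
  have hsum : Summable (fun k : ℤ => 144 * |(k:ℝ)| ^ (β - 2)) := by
    apply Summable.mul_left
    have := Real.summable_abs_int_rpow (b := 2 - β) (by linarith)
    simpa using this
  have hfin : ∑' k, q0 k ≠ ⊤ := hsum.tsum_ofReal_ne_top
  have ht := ENNReal.tendsto_tsum_compl_atTop_zero hfin
  obtain ⟨s, hs⟩ := (ht.eventually (gt_mem_nhds (show (0:ℝ≥0∞) < 2⁻¹ by simp))).exists
  obtain ⟨X1, hX1⟩ := ((tendsto_rpow_atTop (show 0 < 1 - β by linarith)).eventually
    (eventually_ge_atTop (12:ℝ))).exists_forall_of_atTop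
  refine ⟨fun k => if k ∈ s then 0 else q0 k, ?_, max (max 3 ⌈X1⌉) (2 * (s.sup Int.natAbs : ℕ) + 2), ?_⟩
  · refine le_trans (le_of_eq ?_) hs.le
    have := tsum_subtype {x : ℤ | x ∉ s} q0
    refine Eq.trans ?_ this.symm
    congr 1
    funext k
    by_cases hk : k ∈ s <;> simp [Set.indicator, hk]
  · intro H x0 y hx hy hyx
    have hx3 : 3 ≤ |x0| := by omega
    have hxX : X1 ≤ |(x0:ℝ)| := by
      have : ⌈X1⌉ ≤ |x0| := by omega
      have h2 := Int.ceil_le.mp this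
      push_cast at h2
      exact h2
    have hxs : 2 * ((s.sup Int.natAbs : ℕ):ℤ) + 2 ≤ |x0| := by omega
    set t : ℝ := |(x0:ℝ)| with ht'
    have ht3 : 3 ≤ t := by rw [ht']; exact_mod_cast hx3
    have htX := hX1 t hxX
    have htb : 12 * t ^ β ≤ t := by
      have : t ^ (1 - β) * t ^ β = t := by
        rw [← Real.rpow_add (by linarith)]; simp
      have hp : 0 < t ^ β := by positivity
      nlinarith
    set j : ℤ := y - H with hj
    set m : ℤ := |x0| / 2 with hm
    have hj12 : 12 * j ≤ |x0| := by
      have : (12 * (j:ℝ)) ≤ t := by linarith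
      rw [ht'] at this
      exact_mod_cast this
    have hm1 : 1 ≤ m := by omega
    have hj4 : 4 * j ≤ m := by omega
    have hm3 : |x0| ≤ 3 * m := by omega
    have hyj : y = H + j := by omega
    have htm : t ≤ 3 * m := by rw [ht']; exact_mod_cast hm3
    have hmR : (1:ℝ) ≤ m := by exact_mod_cast hm1
    have hj0 : (0:ℝ) < j := by exact_mod_cast (by omega : 0 < j)
    have hcen := Ph_center H x0 m j hm1 (by omega) (by omega)
    rw [← hyj] at hcen
    have hts : t ^ β = t ^ (β - 2) * t ^ 2 := by
      rw [← Real.rpow_natCast t 2, ← Real.rpow_add (by linarith)]; simp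
    have hpos : 0 < t ^ (β - 2) := by positivity
    -- upper bound
    have hup : UU (Hp H) (dl (0, H)) (x0, y) ≤ ENNReal.ofReal (18 * t ^ (β - 2)) := by
      refine (kernel_le H x0 m hm1 (by omega) (x0, y)).trans ?_
      refine (mul_le_mul_right hcen _).trans ?_
      have e1 : ((m.toNat : ℝ≥0∞) + 1)⁻¹ ≤ ENNReal.ofReal (1 / m) := by
        rw [one_div, ENNReal.ofReal_inv_of_pos (by linarith)]
        apply ENNReal.inv_le_inv.mpr
        have : (m:ℝ) = ((m.toNat : ℕ) : ℝ) := by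
          have : (m.toNat : ℤ) = m := by omega
          exact_mod_cast this.symm
        rw [this, ENNReal.ofReal_natCast]
        exact le_self_add
      refine (mul_le_mul_left e1 _).trans ?_
      rw [← ENNReal.ofReal_mul (by positivity)]
      apply ENNReal.ofReal_le_ofReal
      rw [one_div_mul_eq_div, div_div, div_le_iff₀ (by positivity)]
      have h1 : t ^ 2 ≤ 9 * (m:ℝ)^2 := by nlinarith
      have h2 : (j:ℝ) ≤ t ^ (β - 2) * (9 * (m:ℝ)^2) := by
        calc (j:ℝ) ≤ t ^ β := hyx
          _ = t ^ (β - 2) * t ^ 2 := hts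
          _ ≤ _ := by gcongr
      nlinarith
    -- window
    have hw := window H x0 m hm1 (x0, y)
    have hone : UU (Hp H) (fun _ => 1) (x0, y) = 1 := by
      have := UU_one H x0 j.toNat
      rwa [show H + (j.toNat : ℤ) = y by omega] at this
    rw [hone] at hw
    have hph : Ph H x0 m (x0, y) ≤ 2⁻¹ := by
      refine hcen.trans ?_
      rw [show (2:ℝ≥0∞)⁻¹ = ENNReal.ofReal (1/2) by
        rw [one_div, ENNReal.ofReal_inv_of_pos (by norm_num)]; norm_num]
      apply ENNReal.ofReal_le_ofReal
      rw [div_le_iff₀ (by linarith)]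
      have : 4 * (j:ℝ) ≤ m := by exact_mod_cast hj4
      linarith
    have hw2 : (2:ℝ≥0∞)⁻¹ ≤ UU (Hp H) (fun w => if w.2 = H ∧ |w.1 - x0| ≤ m then 1 else 0) (x0, y) := by
      have h1 := hw.trans (add_le_add_right hph _)
      have h2 := tsub_le_iff_right.mpr h1
      rwa [ENNReal.one_sub_inv_two] at h2
    refine le_trans ?_ (Q_lower H x0 m _ (ENNReal.ofReal (36 * t ^ (β - 2))) ?_ (x0, y))
    · refine hup.trans ?_
      refine le_trans (le_of_eq ?_) (mul_le_mul_right hw2 _)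
      rw [show (2:ℝ≥0∞)⁻¹ = ENNReal.ofReal (1/2) by
        rw [one_div, ENNReal.ofReal_inv_of_pos (by norm_num)]; norm_num, ← ENNReal.ofReal_mul (by positivity)]
      congr 1; ring
    · intro k hk
      have hk1 : |x0| - m ≤ |k| := by
        have := abs_sub_abs_le_abs_sub x0 k
        rw [abs_sub_comm] at this; omega
      have hk2 : |k| ≤ |x0| + m := by
        have := abs_sub_abs_le_abs_sub k x0
        omega
      have hks : k ∉ s := by
        intro hks
        have h1 : k.natAbs ≤ s.sup Int.natAbs := Finset.le_sup (f := Int.natAbs) hks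
        rw [Int.abs_eq_natAbs k] at hk1
        omega
      rw [if_neg hks]
      apply ENNReal.ofReal_le_ofReal
      have hk0 : (0:ℝ) < |(k:ℝ)| := by
        have : 0 < |k| := by omega
        exact_mod_cast this
      have hk2t : |(k:ℝ)| ≤ 2 * t := by
        rw [ht']
        have : |k| ≤ 2 * |x0| := by omega
        exact_mod_cast this
      have h1 : (2 * t) ^ (β - 2) ≤ |(k:ℝ)| ^ (β - 2) :=
        Real.rpow_le_rpow_of_nonpos hk0 hk2t (by linarith)
      rw [Real.mul_rpow (by norm_num) (by linarith)] at h1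
      have h2 : (1/4 : ℝ) ≤ (2:ℝ) ^ (β - 2) := by
        calc (1/4 : ℝ) = (2:ℝ) ^ (-2 : ℝ) := by
              rw [Real.rpow_neg (by norm_num)]; norm_num
          _ ≤ _ := Real.rpow_le_rpow_of_exponent_le (by norm_num) (by linarith)
      nlinarith

lemma main_aux (β : ℝ) (hβ0 : 0 < β) (hβ1 : β < 1) (A : Set (ℤ × ℤ)) (h₀ : ℤ) (h0 : 0 ≤ h₀)
    (hw : (0, h₀) ∈ A)
    (hA : ∀ z ∈ A, h₀ < z.2 → (z.2 : ℝ) ≤ |(z.1 : ℝ)| ^ β) :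
    ∃ c : ℝ, 0 < c ∧ ∀ᶠ N : ℕ in atTop, c ≤ harm A N (0, h₀) := by
  classical
  obtain ⟨q, hq, X0, hdom⟩ := Q_dominate β hβ0 hβ1
  set H : ℤ := max h₀ X0 with hH
  have hHh : h₀ ≤ H := le_max_left _ _
  have hHX : X0 ≤ H := le_max_right _ _
  set A0 : Set (ℤ × ℤ) := A ∪ lineH 0 with hA0
  set f := UU A0 (dl (0, h₀)) with hf
  set f' := UU (A0 ∪ Hp H) (dl (0, H)) with hf'
  set k : ℕ := (H - h₀).toNat with hk
  have hA0' : ∀ z ∈ A0, h₀ < z.2 → z ∈ A := by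
    intro z hz hlt
    rcases hz with hz | hz
    · exact hz
    · have : z.2 = 0 := hz
      omega
  -- claim 1
  have c1 : ∀ z, UU (Hp H) (dl (0, H)) z ≤ f' z + ∑' k, q k * UU (Hp H) (dl (k, H)) z := by
    intro z
    apply UU_le (g := fun z => f' z + ∑' k, q k * UU (Hp H) (dl (k, H)) z)
    · intro z hz
      rw [hf', UU_of_mem _ (Or.inr hz)]
      exact le_self_add
    · intro z hz
      have hz' : H < z.2 := by simpa [Hp] using hz
      by_cases hzA : z ∈ A0
      · right
        have hzb := hA z (hA0' z hzA (by omega)) (by omega)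
        have hz1 : (z.1 : ℤ) ≠ 0 := by
          intro h
          rw [h] at hzb
          simp only [Int.cast_zero, abs_zero, Real.zero_rpow hβ0.ne'] at hzb
          have : z.2 ≤ 0 := by exact_mod_cast hzb
          omega
        have hz1' : (1:ℝ) ≤ |(z.1:ℝ)| := by
          have : 1 ≤ |z.1| := Int.one_le_abs hz1
          exact_mod_cast this
        have hz2 : (z.2:ℝ) ≤ |(z.1:ℝ)| := by
          refine hzb.trans ?_
          calc |(z.1:ℝ)| ^ β ≤ |(z.1:ℝ)| ^ (1:ℝ) :=
                Real.rpow_le_rpow_of_exponent_le hz1' hβ1.le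
            _ = _ := Real.rpow_one _
        have hz3 : z.2 ≤ |z.1| := by exact_mod_cast hz2
        refine (hdom H z.1 z.2 (by omega) hz' ?_).trans le_add_self
        refine le_trans ?_ hzb
        exact_mod_cast (by omega : z.2 - H ≤ z.2)
      · left
        rw [avg_add, avg_tsum]
        simp only [avg_mul]
        rw [← UU_of_not_mem (A := A0 ∪ Hp H) _ (by rintro (h | h); exacts [hzA h, hz h])]
        simp only [← UU_of_not_mem _ hz]
        exact le_rfl
  -- straight path
  have path : ∀ i : ℕ, 1 ≤ 4 ^ i * f (0, h₀ + i) := by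
    intro i
    induction i with
    | zero =>
      simp only [pow_zero, one_mul, Nat.cast_zero, add_zero]
      rw [hf, UU_of_mem _ (Or.inl hw)]
      simp [dl]
    | succ i ih =>
      have hn : ((0:ℤ), h₀ + ((i+1:ℕ):ℤ)) ∉ A0 := by
        intro h
        have h1 := hA _ (hA0' _ h (by push_cast; omega)) (by push_cast; omega)
        simp only [Int.cast_zero, abs_zero, Real.zero_rpow hβ0.ne'] at h1
        have : h₀ + ((i+1:ℕ):ℤ) ≤ 0 := by exact_mod_cast h1
        push_cast at this
        omega
      rw [hf, UU_of_not_mem _ hn]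
      unfold avg
      refine ih.trans ?_
      rw [pow_succ, mul_assoc, ← mul_assoc 4, ENNReal.mul_inv_cancel (by norm_num) (by norm_num), one_mul]
      gcongr
      refine le_trans (le_of_eq ?_) le_add_self
      rw [hf, Prod.mk_add_mk]
      congr 2
      push_cast; ring
  -- claim 2
  have c2 : ∀ z, f' z ≤ 4 ^ k * f z := by
    intro z
    apply UU_le (g := fun z => 4 ^ k * f z)
    · intro z _
      unfold dl
      split_ifs with h
      · subst h
        have := path k
        rwa [show h₀ + (k:ℤ) = H by omega] at this
      · exact zero_le
    · intro z hz
      left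
      rw [avg_mul, hf, ← UU_of_not_mem (A := A0) _ (fun h => hz (Or.inl h))]
  -- finiteness
  have c3 : ∀ z : ℤ × ℤ, 0 ≤ z.2 → f z ≤ 4 ^ h₀.toNat * UU (Hp 0) (dl (0, 0)) z := by
    intro z hz
    have down : ∀ i : ℕ, 1 ≤ 4 ^ i * UU (Hp 0) (dl (0, 0)) (0, (i:ℤ)) := by
      intro i
      induction i with
      | zero =>
        rw [UU_of_mem _ (by simp [Hp])]
        simp [dl]
      | succ i ih =>
        rw [UU_of_not_mem _ (by simp [Hp])]
        unfold avg
        refine ih.trans ?_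
        rw [pow_succ, mul_assoc, ← mul_assoc 4, ENNReal.mul_inv_cancel (by norm_num) (by norm_num), one_mul]
        gcongr
        refine le_trans (le_of_eq ?_) le_add_self
        rw [Prod.mk_add_mk]
        congr 2
        push_cast; ring
    have := UU_le (A := A0) (b := dl (0, h₀))
      (g := fun z => if z.2 < 0 then ⊤ else 4 ^ h₀.toNat * UU (Hp 0) (dl (0, 0)) z) ?_ ?_ z
    · have hlt : ¬ (z.2 < 0) := by omega
      simpa only [hlt, if_false] using this
    · intro z _
      by_cases h : z = (0, h₀)
      · subst h
        have hlt : ¬ (h₀ < 0) := by omega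
        simp only [hlt, if_false]
        refine (dl_le _ _).trans ?_
        have := down h₀.toNat
        rwa [show (h₀.toNat : ℤ) = h₀ by omega] at this
      · rw [dl, if_neg h]; exact zero_le
    · intro z hz
      left
      have hz0 : z.2 ≠ 0 := fun h => hz (Or.inr h)
      by_cases hlt : z.2 < 0
      · simp [hlt]
      · have e2 : ¬ (z.2 + 1 < 0) := by omega
        have e3 : ¬ (z.2 + -1 < 0) := by omega
        rw [if_neg hlt, UU_of_not_mem (A := Hp 0) _ (by simp [Hp]; omega), ← avg_mul]
        unfold avg
        simp only [Prod.snd_add, add_zero, hlt, e2, e3, if_false]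
        exact le_rfl
  -- conclusion
  refine ⟨((4 ^ k)⁻¹ * 2⁻¹ : ℝ≥0∞).toReal, ?_, ?_⟩
  · apply ENNReal.toReal_pos
    · simp [ENNReal.mul_eq_top]
    · simp [ENNReal.mul_eq_top]
  filter_upwards [eventually_gt_atTop H.toNat] with N hN
  have hNH : H < N := by omega
  have hfin : ∀ z, f z ≠ ⊤ := fun z => ne_top_of_le_ne_top (by simp) (UU_le_one (dl_le _) z)
  have heq : harm A N (0, h₀) = (∑' z : ↥(lineH (N : ℤ) \ A), f z).toReal := by
    rw [ENNReal.tsum_toReal_eq (f := fun z : ↥(lineH (N : ℤ) \ A) => f z) (fun z => hfin z)]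
    unfold harm
    simp only [hitProb_eq]
    rfl
  rw [heq]
  apply ENNReal.toReal_mono
  · have hle : ∑' z : ↥(lineH (N : ℤ) \ A), f z ≤ 4 ^ h₀.toNat := by
      calc ∑' z : ↥(lineH (N : ℤ) \ A), f z
          ≤ ∑' z : ↥(lineH (N : ℤ) \ A), 4 ^ h₀.toNat * UU (Hp 0) (dl (0, 0)) (z.1.1, (N:ℤ)) := by
            apply ENNReal.tsum_le_tsum
            intro z
            have hz : z.1.2 = N := z.2.1
            have := c3 z (by omega)
            have hzz : ((z.1.1, (N:ℤ)) : ℤ × ℤ) = z.1 := Prod.ext rfl hz.symm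
            simp only [hzz]
            exact this
        _ ≤ ∑' x : ℤ, 4 ^ h₀.toNat * UU (Hp 0) (dl (0, 0)) (x, (N:ℤ)) := by
            apply ENNReal.tsum_comp_le_tsum_of_injective (f := fun z : ↥(lineH (N : ℤ) \ A) => z.1.1)
              (g := fun x : ℤ => 4 ^ h₀.toNat * UU (Hp 0) (dl (0, 0)) (x, (N:ℤ)))
            intro a b hab
            have ha : a.1.2 = N := a.2.1
            have hb : b.1.2 = N := b.2.1
            exact Subtype.ext (Prod.ext hab (ha.trans hb.symm))
        _ ≤ 4 ^ h₀.toNat * 1 := by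
            rw [ENNReal.tsum_mul_left]
            gcongr
            exact mass_le 0 0 N
        _ = _ := mul_one _
    exact ne_top_of_le_ne_top (by simp) hle
  · have s1 : 1 ≤ ∑' x : ℤ, f' (x, (N:ℤ)) + 2⁻¹ := by
      calc 1 ≤ ∑' x : ℤ, UU (Hp H) (dl (0, H)) (x, (N:ℤ)) := mass_ge H N hNH.le
        _ ≤ ∑' x : ℤ, (f' (x, (N:ℤ)) + ∑' k, q k * UU (Hp H) (dl (k, H)) (x, (N:ℤ))) :=
            ENNReal.tsum_le_tsum (fun x => c1 _)
        _ = ∑' x : ℤ, f' (x, (N:ℤ)) + ∑' k, q k * ∑' x : ℤ, UU (Hp H) (dl (k, H)) (x, (N:ℤ)) := by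
            rw [ENNReal.tsum_add, ENNReal.tsum_comm]
            simp only [ENNReal.tsum_mul_left]
        _ ≤ ∑' x : ℤ, f' (x, (N:ℤ)) + ∑' k, q k * 1 := by
            gcongr with k
            exact mass_le H k N
        _ ≤ _ := by
            simp only [mul_one]
            gcongr
    have s2 : (2:ℝ≥0∞)⁻¹ ≤ ∑' x : ℤ, f' (x, (N:ℤ)) := by
      have h2 := tsub_le_iff_right.mpr s1
      rwa [ENNReal.one_sub_inv_two] at h2
    have s3 : ∑' x : ℤ, f' (x, (N:ℤ)) ≤ ∑' z : ↥(lineH (N : ℤ) \ A), f' z := by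
      rw [tsum_subtype (lineH (N : ℤ) \ A) f']
      calc ∑' x : ℤ, f' (x, (N:ℤ)) = ∑' x : ℤ, (lineH (N : ℤ) \ A).indicator f' (x, (N:ℤ)) := by
            congr 1
            funext x
            by_cases hx : (x, (N:ℤ)) ∈ A
            · rw [Set.indicator_of_notMem (fun h => h.2 hx), hf', UU_of_mem _ (Or.inl (Or.inl hx)),
                dl, if_neg]
              simp only [Prod.mk.injEq]
              omega
            · rw [Set.indicator_of_mem]
              exact ⟨rfl, hx⟩
        _ ≤ _ := by
            apply ENNReal.tsum_comp_le_tsum_of_injective (f := fun x : ℤ => (x, (N:ℤ)))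
              (g := (lineH (N : ℤ) \ A).indicator f')
            intro a b hab
            exact (Prod.mk.inj hab).1
    have s4 : ∑' z : ↥(lineH (N : ℤ) \ A), f' z ≤ 4 ^ k * ∑' z : ↥(lineH (N : ℤ) \ A), f z := by
      rw [← ENNReal.tsum_mul_left]
      exact ENNReal.tsum_le_tsum (fun z => c2 z)
    have s5 := s2.trans (s3.trans s4)
    calc ((4:ℝ≥0∞) ^ k)⁻¹ * 2⁻¹ ≤ (4 ^ k)⁻¹ * (4 ^ k * ∑' z : ↥(lineH (N : ℤ) \ A), f z) := by
          gcongr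
      _ = _ := by
          rw [← mul_assoc, ENNReal.inv_mul_cancel (by simp) (by simp), one_mul]


/-- **Lemma 1.** Let `α > 1` with `α ∉ ℚ ∪ ℚ₂`, let `B ⊂ ℍ` be nonempty with
`B̂ = B \ {x ∈ ℍ : x₂ ≤ |x₁|^{1/α}}` finite, and let `h₀ = max_{x ∈ B̂} x₂` if
`B̂ ≠ ∅`, while `h₀ = min {h ≥ 0 : B ∩ ([−⌈h^α⌉,⌈h^α⌉] × [0,h]) ≠ ∅}` if `B̂ = ∅`.
Then there is a constant `c > 0` such that for all sufficiently large `N`,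
`H_{B ∪ l_{h₀}, N}(l_{h₀}) = Σ_{w ∈ l_{h₀}} H_{B ∪ l_{h₀}, N}(w) ≥ c`. -/
theorem harm_segment_ge (α : ℝ) (hα : 1 < α) (hirr : Irrational α) (hQ2 : α ∉ Q2)
    (B : Set (ℤ × ℤ)) (hB : B ⊆ upperH) (hne : B.Nonempty)
    (hfin : (Bhat α B).Finite)
    (h₀ : ℤ)
    (hmax : (Bhat α B).Nonempty → IsGreatest (Prod.snd '' Bhat α B) h₀)
    (hmin : Bhat α B = ∅ →
      IsLeast {h : ℤ | 0 ≤ h ∧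
        (B ∩ {x | |x.1| ≤ ⌈(h : ℝ) ^ α⌉ ∧ 0 ≤ x.2 ∧ x.2 ≤ h}).Nonempty} h₀) :
    ∃ c : ℝ, 0 < c ∧ ∀ᶠ N : ℕ in atTop,
      c ≤ ∑' w : ↥(segL α h₀), harm (B ∪ segL α h₀) N (w : ℤ × ℤ) := by
  have hα0 : 0 < α := by linarith
  have hbh : ∀ z ∈ Bhat α B, z.2 ≤ h₀ := fun z hz => (hmax ⟨z, hz⟩).2 ⟨z, hz, rfl⟩
  have h0 : 0 ≤ h₀ := by
    by_cases hE : (Bhat α B).Nonempty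
    · obtain ⟨z, hz, hzz⟩ := (hmax hE).1
      have : 0 ≤ z.2 := hB hz.1
      omega
    · exact (hmin (Set.not_nonempty_iff_eq_empty.mp hE)).1.1
  have hwS : (0, h₀) ∈ segL α h₀ := by
    refine ⟨?_, rfl⟩
    simp only [abs_zero]
    apply Int.floor_nonneg.mpr
    apply Real.rpow_nonneg
    exact_mod_cast h0
  obtain ⟨c, hc, hev⟩ := main_aux (1 / α) (by positivity) (by rw [div_lt_one hα0]; exact hα)
    (B ∪ segL α h₀) h₀ h0 (Or.inr hwS) (by
      intro z hz hlt
      rcases hz with hz | hz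
      · by_contra hcon
        have : z ∈ Bhat α B := ⟨hz, fun h => hcon h.2⟩
        have := hbh z this
        omega
      · have : z.2 = h₀ := hz.2
        omega)
  refine ⟨c, hc, ?_⟩
  filter_upwards [hev] with N hN
  have hfinS : (segL α h₀).Finite := by
    apply Set.Finite.subset ((Set.finite_Icc (-⌊(h₀ : ℝ) ^ α⌋) ⌊(h₀ : ℝ) ^ α⌋).prod (Set.finite_singleton h₀))
    intro z hz
    exact ⟨abs_le.mp hz.1, hz.2⟩
  have : Finite ↥(segL α h₀) := hfinS
  have nn : ∀ w : ↥(segL α h₀), 0 ≤ harm (B ∪ segL α h₀) N (w : ℤ × ℤ) := by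
    intro w
    unfold harm
    apply tsum_nonneg
    intro z
    rw [hitProb_eq]
    exact ENNReal.toReal_nonneg
  refine hN.trans ?_
  exact (Summable.of_finite (f := fun w : ↥(segL α h₀) => harm (B ∪ segL α h₀) N (w : ℤ × ℤ))).le_tsum
    ⟨(0, h₀), hwS⟩ (fun w _ => nn w)

end SHM
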